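/- The energy of the bubble simplifies as E(U) = −(1/n)·|K|·∫_{ℝⁿ₊} U(x)^{2n/(n−2)} dx + H·∫_{ℝ^{n−1}} U(x̃, 0)^{2(n−1)/(n−2)} dx̃. -/

import Mathlib

open Real MeasureTheory

noncomputable section

/-- `αₙ = (4n(n−1))^((n−2)/4)`. -/
def alphaN (n : ℕ) : ℝ := (4 * (n : ℝ) * ((n : ℝ) - 1)) ^ (((n : ℝ) - 2) / 4)

/-- `cₙ = 4(n−1)/(n−2)`. -/
def cN (n : ℕ) : ℝ := 4 * ((n : ℝ) - 1) / ((n : ℝ) - 2)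

/-- Points of `ℝⁿ = ℝ^{n-1} × ℝ`, written as pairs `(y, xₙ)`. -/
abbrev HalfPt (n : ℕ) := (Fin (n - 1) → ℝ) × ℝ

/-- `|y|² + (xₙ + D)² − 1`. -/
def QD (n : ℕ) (D : ℝ) (x : HalfPt n) : ℝ := (∑ i, (x.1 i) ^ 2) + (x.2 + D) ^ 2 - 1

/-- The standard bubble `U(x) = αₙ |K|^{-(n-2)/4} (|y|² + (xₙ+D)² − 1)^{-(n-2)/2}`. -/
def bubbleU (n : ℕ) (K D : ℝ) (x : HalfPt n) : ℝ :=
  alphaN n * |K| ^ (-(((n : ℝ) - 2) / 4)) * QD n D x ^ (-(((n : ℝ) - 2) / 2))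

/-- Second directional derivative of `f` in the direction `v` at `x`. -/
def dd2 (n : ℕ) (f : HalfPt n → ℝ) (v : HalfPt n) (x : HalfPt n) : ℝ :=
  fderiv ℝ (fun y => fderiv ℝ f y v) x v

/-- Euclidean Laplacian: sum of the second partial derivatives along the coordinate
directions of `ℝ^{n-1} × ℝ`. -/
def lap (n : ℕ) (f : HalfPt n → ℝ) (x : HalfPt n) : ℝ :=
  (∑ i : Fin (n - 1), dd2 n f (Pi.single i 1, 0) x) + dd2 n f ((0 : Fin (n - 1) → ℝ), 1) x

/-- The bubble family `U_{δ,x₀(δ)}` with `x₀(δ) = (t, −Dδ)`. -/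
def bubbleFam (n : ℕ) (K D δ : ℝ) (t : Fin (n - 1) → ℝ) (x : HalfPt n) : ℝ :=
  alphaN n * |K| ^ (-(((n : ℝ) - 2) / 4)) * δ ^ (((n : ℝ) - 2) / 2) *
    ((∑ i, (x.1 i - t i) ^ 2) + (x.2 + D * δ) ^ 2 - δ ^ 2) ^ (-(((n : ℝ) - 2) / 2))

/-- `𝔧ᵢ`, `i = 1, …, n−1`: the tangential derivatives of the bubble. -/
def jTan (n : ℕ) (K D : ℝ) (i : Fin (n - 1)) (x : HalfPt n) : ℝ :=
  alphaN n * |K| ^ (-(((n : ℝ) - 2) / 4)) * (2 - (n : ℝ)) * x.1 i * QD n D x ^ (-((n : ℝ) / 2))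

/-- `𝔧ₙ`. -/
def jNor (n : ℕ) (K D : ℝ) (x : HalfPt n) : ℝ :=
  alphaN n * |K| ^ (-(((n : ℝ) - 2) / 4)) * (((n : ℝ) - 2) / 2) *
    ((∑ i, (x.1 i) ^ 2) + x.2 ^ 2 + 1 - D ^ 2) * QD n D x ^ (-((n : ℝ) / 2))

/-- All the `𝔧ᵢ`, `i = 1, …, n`, indexed by `Fin n`. -/
def jAll (n : ℕ) (K D : ℝ) (i : Fin n) (x : HalfPt n) : ℝ :=
  if h : (i : ℕ) < n - 1 then jTan n K D ⟨(i : ℕ), h⟩ x else jNor n K D x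

/-- `I^n_{n-1} = ∫₀^∞ ρⁿ (1+ρ²)^{-(n-1)} dρ`. -/
def Iconst (n : ℕ) : ℝ := ∫ ρ in Set.Ioi (0 : ℝ), ρ ^ n / (1 + ρ ^ 2) ^ (n - 1)

/-- `ω_{n-1}`: the `(n−2)`-dimensional Hausdorff measure of the unit sphere
`S^{n-2} ⊆ ℝ^{n-1}`. -/
def omegaN (n : ℕ) : ℝ :=
  (μH[(n : ℝ) - 2] (Metric.sphere (0 : EuclideanSpace ℝ (Fin (n - 1))) 1)).toReal

/-- `φ_m(D) = ∫_D^∞ (t²−1)^{−m} dt`. -/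
def phiFun (m D : ℝ) : ℝ := ∫ t in Set.Ioi D, (t ^ 2 - 1) ^ (-m)

/-- `|∇f(x)|²`, the squared Euclidean norm of the gradient. -/
def gradSq (n : ℕ) (f : HalfPt n → ℝ) (x : HalfPt n) : ℝ :=
  (∑ i : Fin (n - 1), (fderiv ℝ f x (Pi.single i 1, (0 : ℝ))) ^ 2) +
    (fderiv ℝ f x ((0 : Fin (n - 1) → ℝ), 1)) ^ 2

/-- The energy of the bubble. -/
def energyE (n : ℕ) (K H D : ℝ) : ℝ :=
  cN n / 2 * (∫ x in {x : HalfPt n | 0 < x.2}, gradSq n (bubbleU n K D) x) +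
    ((n : ℝ) - 2) / (2 * (n : ℝ)) * |K| *
      (∫ x in {x : HalfPt n | 0 < x.2}, bubbleU n K D x ^ (2 * (n : ℝ) / ((n : ℝ) - 2))) -
    ((n : ℝ) - 2) * H *
      (∫ y : Fin (n - 1) → ℝ, bubbleU n K D (y, 0) ^ (2 * ((n : ℝ) - 1) / ((n : ℝ) - 2)))

/-- The Euclidean norm `|x|` on `ℝ^{n-1} × ℝ`. -/
def enormE (n : ℕ) (x : HalfPt n) : ℝ := Real.sqrt ((∑ i, (x.1 i) ^ 2) + x.2 ^ 2)

/-- The source term `E_h`. -/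
def Ehsrc (n : ℕ) (K D : ℝ) (h : Fin (n - 1) → Fin (n - 1) → ℝ) (x : HalfPt n) : ℝ :=
  (8 * ((n : ℝ) - 1) / ((n : ℝ) - 2)) *
    (∑ i : Fin (n - 1), ∑ j : Fin (n - 1),
      h i j *
        fderiv ℝ (fun y => fderiv ℝ (bubbleU n K D) y (Pi.single j 1, (0 : ℝ))) x
          (Pi.single i 1, (0 : ℝ))) * x.2

/-!
Testing the boundary value problem solved by `U` against `U` itself gives the Nehari identity
`cₙ ∫ |∇U|² + |K| ∫ U^(2n/(n−2)) = 2(n−1) H ∫ U^(2(n−1)/(n−2))`, and the energy formula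
follows by eliminating `∫ |∇U|²` with it.

With `Q = |y|² + (xₙ + D)² − 1`, the field `U ∇U` is a constant multiple of `Q^(-(n-1)) X`, where
`X = (y, xₙ + D)` is the dilation field centred at `(0, −D)`. In the cone coordinates
`((t + D) z, t)` around that centre the divergence theorem for a multiple of `X` is the fundamental
theorem of calculus on each ray, so no general divergence theorem on the half-space is needed.
-/

section ConeCoordinates

open Filter Module Set Topology

theorem prod_restrict_right {α β : Type*} [MeasurableSpace α] [MeasurableSpace β] (μ : Measure α)
    (ν : Measure β) [SFinite μ] [SFinite ν] (t : Set β) :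
    μ.prod (ν.restrict t) = (μ.prod ν).restrict (Prod.snd ⁻¹' t) := by
  rw [← univ_prod, ← Measure.prod_restrict, Measure.restrict_univ]

variable {E F T : Type*} [NormedAddCommGroup E] [NormedSpace ℝ E] [NormedAddCommGroup F]
  [NormedSpace ℝ F]

theorem hasDerivAt_pow_smul_ray {f : E × ℝ → F} {f' : E × ℝ →L[ℝ] F} (k : ℕ) {D t : ℝ} {z : E}
    (hf : HasFDerivAt f f' ((t + D) • z, t)) :
    HasDerivAt (fun t => (t + D) ^ (k + 1) • f ((t + D) • z, t))
      ((t + D) ^ k • (((k : ℝ) + 1) • f ((t + D) • z, t) + f' ((t + D) • z, t + D))) t := by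
  have hadd : HasDerivAt (fun t : ℝ => t + D) 1 t := (hasDerivAt_id t).add_const D
  have hray : HasDerivAt (fun t : ℝ => ((t + D) • z, t)) (z, (1 : ℝ)) t := by
    simpa using (hadd.smul_const z).prodMk (hasDerivAt_id t)
  have hscale : ((t + D) • z, t + D) = (t + D) • (z, (1 : ℝ)) := by simp
  refine ((hadd.fun_pow (k + 1)).fun_smul (hf.comp_hasDerivAt_of_eq t hray rfl)).congr_deriv ?_
  rw [hscale, map_smul, pow_succ]
  simp only [Function.comp_apply, Nat.cast_add, Nat.cast_one, Nat.add_sub_cancel]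
  module

variable [FiniteDimensional ℝ E] [MeasurableSpace E] [BorelSpace E] [MeasurableSpace T]
  (μ : Measure E) [μ.IsAddHaarMeasure] {ν : Measure T} [SFinite ν] {r : T → ℝ}

theorem measurePreserving_smul_prod (hr : Measurable r) (hr0 : ∀ᵐ t ∂ν, r t ≠ 0) :
    MeasurePreserving (fun p : E × T => (r p.2 • p.1, p.2))
      (μ.prod (ν.withDensity fun t => ENNReal.ofReal |r t ^ finrank ℝ E|)) (μ.prod ν) := by
  have hΦ : Measurable fun p : E × T => (r p.2 • p.1, p.2) := by fun_prop
  refine ⟨hΦ, Measure.ext fun s hs => ?_⟩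
  rw [Measure.map_apply hΦ hs, Measure.prod_apply_symm (hΦ hs), Measure.prod_apply_symm hs,
    lintegral_withDensity_eq_lintegral_mul _ (by fun_prop)
      (measurable_measure_prodMk_right (hΦ hs))]
  refine lintegral_congr_ae (hr0.mono fun t ht => ?_)
  have hslice : (fun z : E => (z, t)) ⁻¹' ((fun p : E × T => (r p.2 • p.1, p.2)) ⁻¹' s)
      = (r t • ·) ⁻¹' ((fun y => (y, t)) ⁻¹' s) := rfl
  simp only [Pi.mul_apply]
  rw [hslice, Measure.addHaar_preimage_smul μ ht, ← mul_assoc, ← ENNReal.ofReal_mul (abs_nonneg _),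
    ← abs_mul, mul_inv_cancel₀ (pow_ne_zero _ ht), abs_one, ENNReal.ofReal_one, one_mul]

theorem integrable_pow_smul_comp_smul_prod (hr : Measurable r) (hr0 : ∀ᵐ t ∂ν, r t ≠ 0)
    {g : E × T → F} (hg : Integrable g (μ.prod ν)) :
    Integrable (fun p : E × T => |r p.2 ^ finrank ℝ E| • g (r p.2 • p.1, p.2)) (μ.prod ν) := by
  have hcomp := ((measurePreserving_smul_prod μ hr hr0).integrable_comp hg.1).2 hg
  rw [prod_withDensity_right (by fun_prop),
    integrable_withDensity_iff_integrable_smul' (by fun_prop) (by simp)] at hcomp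
  simpa only [ENNReal.toReal_ofReal (abs_nonneg _), Function.comp_def] using hcomp

theorem integral_prod_eq_integral_pow_smul (hr : Measurable r) (hr0 : ∀ᵐ t ∂ν, r t ≠ 0)
    {g : E × T → F} (hg : Integrable g (μ.prod ν)) :
    ∫ p, g p ∂μ.prod ν = ∫ z, ∫ t, |r t ^ finrank ℝ E| • g (r t • z, t) ∂ν ∂μ := by
  have hΦ := measurePreserving_smul_prod μ hr hr0
  calc ∫ p, g p ∂μ.prod ν
      = ∫ p : E × T, g (r p.2 • p.1, p.2)
          ∂μ.prod (ν.withDensity fun t => ENNReal.ofReal |r t ^ finrank ℝ E|) := by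
        conv_lhs => rw [← hΦ.map_eq]
        exact integral_map hΦ.measurable.aemeasurable (hΦ.map_eq ▸ hg.1)
    _ = ∫ p : E × T, |r p.2 ^ finrank ℝ E| • g (r p.2 • p.1, p.2) ∂μ.prod ν := by
        rw [prod_withDensity_right (by fun_prop),
          integral_withDensity_eq_integral_toReal_smul (by fun_prop) (by simp)]
        simp only [ENNReal.toReal_ofReal (abs_nonneg _)]
    _ = ∫ z, ∫ t, |r t ^ finrank ℝ E| • g (r t • z, t) ∂ν ∂μ :=
        integral_prod _ (integrable_pow_smul_comp_smul_prod μ hr hr0 hg)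

/-- For the dilation field `X x = (x.1, x.2 + D)`, centred at `(0, -D)`, the integrand on the left
is `div (f X)`; the rays `t ↦ ((t + D) • z, t)` are integral curves of `X` up to
time change. -/
theorem integral_halfSpace_div_smul_dilation [CompleteSpace F] {f : E × ℝ → F}
    {f' : E × ℝ → E × ℝ →L[ℝ] F} {D : ℝ} (hD : 0 < D)
    (hf : ∀ x, 0 ≤ x.2 → HasFDerivAt f (f' x) x)
    (hint : IntegrableOn (fun x => ((finrank ℝ E : ℝ) + 1) • f x + f' x (x.1, x.2 + D))
      {x | 0 < x.2} (μ.prod volume))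
    (hlim : ∀ z, Tendsto (fun t => (t + D) ^ (finrank ℝ E + 1) • f ((t + D) • z, t)) atTop (𝓝 0)) :
    ∫ x in {x : E × ℝ | 0 < x.2},
        (((finrank ℝ E : ℝ) + 1) • f x + f' x (x.1, x.2 + D)) ∂μ.prod volume
      = -(D • ∫ y, f (y, 0) ∂μ) := by
  set d := finrank ℝ E
  set g : E × ℝ → F := fun x => ((d : ℝ) + 1) • f x + f' x (x.1, x.2 + D)
  have hr : Measurable fun t : ℝ => t + D := by fun_prop
  have hpos : ∀ t ∈ Ioi (0 : ℝ), 0 < t + D := fun t ht => add_pos ht hD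
  have hr0 : ∀ᵐ t ∂volume.restrict (Ioi (0 : ℝ)), t + D ≠ 0 :=
    ae_restrict_of_forall_mem measurableSet_Ioi fun t ht => (hpos t ht).ne'
  have habs : ∀ z, EqOn (fun t => |(t + D) ^ d| • g ((t + D) • z, t))
      (fun t => (t + D) ^ d • g ((t + D) • z, t)) (Ioi 0) := fun z t ht => by
    simp only [abs_of_pos (pow_pos (hpos t ht) d)]
  have hprod : (μ.prod volume).restrict {x : E × ℝ | 0 < x.2}
      = μ.prod (volume.restrict (Ioi 0)) := (prod_restrict_right μ volume (Ioi 0)).symm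
  rw [IntegrableOn, hprod] at hint
  have hray : ∀ᵐ z ∂μ, ∫ t in Ioi (0 : ℝ), |(t + D) ^ d| • g ((t + D) • z, t)
      = -(D ^ (d + 1) • f (D • z, 0)) := by
    filter_upwards [(integrable_pow_smul_comp_smul_prod μ hr hr0 hint).prod_right_ae] with z hz
    have hz' : IntegrableOn (fun t => (t + D) ^ d • g ((t + D) • z, t)) (Ioi 0) :=
      IntegrableOn.congr_fun hz (habs z) measurableSet_Ioi
    rw [setIntegral_congr_fun measurableSet_Ioi (habs z), integral_Ioi_of_hasDerivAt_of_tendsto'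
      (fun t ht => hasDerivAt_pow_smul_ray d (hf _ ht)) hz' (hlim z)]
    simp only [zero_add, zero_sub]
  rw [hprod, integral_prod_eq_integral_pow_smul μ hr hr0 hint,
    integral_congr_ae hray, integral_neg, integral_smul,
    Measure.integral_comp_smul μ (fun y => f (y, 0)), smul_smul, abs_of_pos (by positivity),
    pow_succ', mul_assoc, mul_inv_cancel₀ (by positivity), mul_one]

end ConeCoordinates

section QD

open Filter Module Set Topology

variable {n m : ℕ} {D : ℝ} {x : HalfPt n}

theorem exists_mul_sum_sq_le_QD (n : ℕ) (hD : 1 < D) :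
    ∃ c > 0, ∀ x : HalfPt n, 0 ≤ x.2 → c * ((∑ i, x.1 i ^ 2) + (x.2 + D) ^ 2) ≤ QD n D x := by
  refine ⟨1 - (D ^ 2)⁻¹, sub_pos.2 (inv_lt_one_of_one_lt₀ (one_lt_pow₀ hD two_ne_zero)),
    fun x hx => ?_⟩
  have hN : D ^ 2 ≤ (∑ i, x.1 i ^ 2) + (x.2 + D) ^ 2 :=
    le_add_of_nonneg_of_le (Finset.sum_nonneg fun i _ => sq_nonneg _) (by gcongr; linarith)
  have hone : 1 ≤ (D ^ 2)⁻¹ * ((∑ i, x.1 i ^ 2) + (x.2 + D) ^ 2) := by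
    rwa [inv_mul_eq_div, one_le_div (by positivity)]
  rw [QD, sub_mul, one_mul]
  linarith

theorem QD_pos (hD : 1 < D) (hx : 0 ≤ x.2) : 0 < QD n D x := by
  obtain ⟨c, hc, hQ⟩ := exists_mul_sum_sq_le_QD n hD
  exact (mul_pos hc (by positivity)).trans_le (hQ x hx)

theorem norm_sq_le_sum_sq_add_sq (hx : 0 ≤ x.2) (hD : 0 ≤ D) :
    ‖x‖ ^ 2 ≤ (∑ i, x.1 i ^ 2) + (x.2 + D) ^ 2 := by
  have hsum : 0 ≤ ∑ i, x.1 i ^ 2 := Finset.sum_nonneg fun i _ => sq_nonneg _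
  rw [← Real.le_sqrt (norm_nonneg x) (by positivity), norm_prod_le_iff,
    pi_norm_le_iff_of_nonneg (Real.sqrt_nonneg _)]
  refine ⟨fun i => Real.abs_le_sqrt ?_, Real.abs_le_sqrt ?_⟩
  · exact le_add_of_le_of_nonneg
      (Finset.single_le_sum (f := fun i => x.1 i ^ 2) (fun j _ => sq_nonneg _) (Finset.mem_univ i))
      (sq_nonneg _)
  · nlinarith

theorem exists_mul_one_add_norm_sq_le_QD (n : ℕ) (hD : 1 < D) :
    ∃ c > 0, ∀ x : HalfPt n, 0 ≤ x.2 → c * (1 + ‖x‖ ^ 2) ≤ QD n D x := by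
  obtain ⟨c, hc, hQ⟩ := exists_mul_sum_sq_le_QD n hD
  refine ⟨c / 2, half_pos hc, fun x hx => ?_⟩
  have hnorm := norm_sq_le_sum_sq_add_sq hx (zero_le_one.trans hD.le)
  have hone : 1 ≤ (∑ i, x.1 i ^ 2) + (x.2 + D) ^ 2 :=
    le_add_of_nonneg_of_le (Finset.sum_nonneg fun i _ => sq_nonneg _)
      (one_le_pow₀ (by linarith))
  calc c / 2 * (1 + ‖x‖ ^ 2) = c * ((1 + ‖x‖ ^ 2) / 2) := by ring
    _ ≤ c * ((∑ i, x.1 i ^ 2) + (x.2 + D) ^ 2) := by gcongr; linarith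
    _ ≤ QD n D x := hQ x hx

theorem measurableSet_halfSpace (n : ℕ) : MeasurableSet {x : HalfPt n | 0 < x.2} :=
  measurableSet_lt measurable_const measurable_snd

theorem integrableOn_inv_QD_pow (hm : n < 2 * m) (hD : 1 < D) :
    IntegrableOn (fun x => (QD n D x ^ m)⁻¹) {x | 0 < x.2} := by
  obtain ⟨c, hc, hQ⟩ := exists_mul_one_add_norm_sq_le_QD n hD
  have hdim : (finrank ℝ (HalfPt n) : ℝ) < 2 * m := by
    rw [finrank_prod, finrank_fin_fun, finrank_self]
    exact_mod_cast (by omega : n - 1 + 1 < 2 * m)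
  have hdom := ((integrable_rpow_neg_one_add_norm_sq
    (μ := (volume : Measure (Fin (n - 1) → ℝ)).prod volume) hdim).const_mul
    (c ^ m)⁻¹).integrableOn (s := {x : HalfPt n | 0 < x.2})
  refine hdom.mono' (by unfold QD; fun_prop)
    (ae_restrict_of_forall_mem (measurableSet_halfSpace n) fun x hx => ?_)
  have hpos := QD_pos hD (le_of_lt hx)
  have hexp : -(2 * (m : ℝ)) / 2 = -(m : ℝ) := by ring
  rw [Real.norm_of_nonneg (by positivity), hexp, Real.rpow_neg (by positivity), Real.rpow_natCast,
    ← mul_inv, ← mul_pow]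
  gcongr
  exact hQ x (le_of_lt hx)

theorem differentiable_QD (n : ℕ) (D : ℝ) : Differentiable ℝ (QD n D) := by
  unfold QD
  fun_prop

theorem fderiv_QD_apply (x v : HalfPt n) :
    fderiv ℝ (QD n D) x v = 2 * ((∑ i, x.1 i * v.1 i) + (x.2 + D) * v.2) := by
  have hcoord : ∀ i, HasFDerivAt (fun x : HalfPt n => x.1 i)
      ((ContinuousLinearMap.proj i).comp (ContinuousLinearMap.fst ℝ _ _)) x := fun i =>
    ((ContinuousLinearMap.proj (R := ℝ) (φ := fun _ : Fin (n - 1) => ℝ) i).comp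
      (ContinuousLinearMap.fst ℝ _ ℝ)).hasFDerivAt
  have hQ : HasFDerivAt (QD n D) _ x := ((HasFDerivAt.fun_sum fun i _ => (hcoord i).pow 2).add
    ((hasFDerivAt_snd.add_const D).pow 2)).sub_const 1
  rw [hQ.fderiv]
  simp only [Nat.add_one_sub_one, pow_one, nsmul_eq_mul, Nat.cast_ofNat, smul_add, add_apply,
    sum_apply, smul_apply, ContinuousLinearMap.comp_apply, ContinuousLinearMap.coe_fst',
    ContinuousLinearMap.proj_apply, smul_eq_mul, mul_assoc, ← Finset.mul_sum,
    ContinuousLinearMap.coe_snd']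
  ring

theorem tendsto_pow_mul_inv_QD_pow (hm : n < 2 * m) (hD : 1 < D) (z : Fin (n - 1) → ℝ) :
    Tendsto (fun t => (t + D) ^ n * (QD n D ((t + D) • z, t) ^ m)⁻¹) atTop (𝓝 0) := by
  obtain ⟨c, hc, hQ⟩ := exists_mul_sum_sq_le_QD n hD
  have hlim : Tendsto (fun t => (c ^ m)⁻¹ * (t + D)⁻¹) atTop (𝓝 0) := by
    simpa using (tendsto_inv_atTop_zero.comp
      (tendsto_atTop_add_const_right atTop D tendsto_id)).const_mul (c ^ m)⁻¹
  refine squeeze_zero' ?_ ?_ hlim <;> filter_upwards [eventually_ge_atTop 0] with t ht <;>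
    have hpos : 0 < QD n D ((t + D) • z, t) := QD_pos hD ht
  · positivity
  · have hu : 1 ≤ t + D := by linarith
    have hray : c * (t + D) ^ 2 ≤ QD n D ((t + D) • z, t) :=
      le_trans (by gcongr; exact le_add_of_nonneg_left (Finset.sum_nonneg fun i _ => sq_nonneg _))
        (hQ _ ht)
    calc (t + D) ^ n * (QD n D ((t + D) • z, t) ^ m)⁻¹
        ≤ (t + D) ^ n * ((c * (t + D) ^ 2) ^ m)⁻¹ := by gcongr
      _ = (c ^ m)⁻¹ * ((t + D) ^ n / (t + D) ^ (2 * m)) := by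
          rw [mul_pow, ← pow_mul, mul_inv]
          ring
      _ ≤ (c ^ m)⁻¹ * (t + D)⁻¹ := by
          gcongr
          rw [div_le_iff₀ (by positivity), inv_mul_eq_div, le_div_iff₀ (by positivity), ← pow_succ]
          exact pow_le_pow_right₀ hu hm

theorem hasFDerivAt_inv_QD_pow (m : ℕ) (hQ : QD n D x ≠ 0) :
    HasFDerivAt (fun x => (QD n D x ^ m)⁻¹)
      ((-(m * (QD n D x ^ (m + 1))⁻¹)) • fderiv ℝ (QD n D) x) x := by
  have hderiv := (hasDerivAt_zpow (-(m : ℤ)) (QD n D x) (Or.inl hQ)).comp_hasFDerivAt x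
    (differentiable_QD n D x).hasFDerivAt
  have hexp : (-(m : ℤ)) - 1 = -((m + 1 : ℕ) : ℤ) := by push_cast; ring
  simpa only [Function.comp_def, hexp, zpow_neg, zpow_natCast, Int.cast_neg, Int.cast_natCast,
    neg_mul] using hderiv

/-- The integrand on the left is `-div ((QD ^ m)⁻¹ X)` for the dilation field
`X x = (x.1, x.2 + D)`. -/
theorem integral_halfSpace_inv_QD_pow (hn : 1 ≤ n) (hm : n < 2 * m) (hD : 1 < D) :
    ∫ x in {x : HalfPt n | 0 < x.2},
        ((2 * m - n) * (QD n D x ^ m)⁻¹ + 2 * m * (QD n D x ^ (m + 1))⁻¹)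
      = D * ∫ y, (QD n D (y, 0) ^ m)⁻¹ := by
  have hdim : finrank ℝ (Fin (n - 1) → ℝ) + 1 = n := by
    rw [finrank_fin_fun, Nat.sub_add_cancel hn]
  have hdiv : EqOn (fun x => ((finrank ℝ (Fin (n - 1) → ℝ) : ℝ) + 1) • (QD n D x ^ m)⁻¹ +
        ((-(m * (QD n D x ^ (m + 1))⁻¹)) • fderiv ℝ (QD n D) x) (x.1, x.2 + D))
      (fun x => -((2 * m - n) * (QD n D x ^ m)⁻¹ + 2 * m * (QD n D x ^ (m + 1))⁻¹))
      {x | 0 < x.2} := by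
    intro x hx
    have hpos := QD_pos hD (le_of_lt hx)
    have heuler : fderiv ℝ (QD n D) x (x.1, x.2 + D) = 2 * (QD n D x + 1) := by
      rw [fderiv_QD_apply, QD]
      ring_nf
    have hcast : (finrank ℝ (Fin (n - 1) → ℝ) : ℝ) + 1 = n := by exact_mod_cast hdim
    simp only [smul_apply, smul_eq_mul, heuler, hcast]
    field_simp
    ring
  have hint : IntegrableOn
      (fun x => -((2 * m - n) * (QD n D x ^ m)⁻¹ + 2 * m * (QD n D x ^ (m + 1))⁻¹))
      {x : HalfPt n | 0 < x.2} :=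
    (((integrableOn_inv_QD_pow hm hD).const_mul _).add
      ((integrableOn_inv_QD_pow (by omega) hD).const_mul _)).neg
  have hgauss := integral_halfSpace_div_smul_dilation volume (zero_lt_one.trans hD)
    (fun x hx => hasFDerivAt_inv_QD_pow m (QD_pos hD hx).ne')
    (hint.congr_fun hdiv.symm (measurableSet_halfSpace n))
    (by simpa only [hdim, smul_eq_mul] using tendsto_pow_mul_inv_QD_pow hm hD)
  rw [← Measure.volume_eq_prod, setIntegral_congr_fun (measurableSet_halfSpace n) hdiv,
    integral_neg, neg_inj] at hgauss
  exact hgauss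

end QD

section Bubble

variable {n : ℕ} {K H D : ℝ} {x : HalfPt n}

/-- The constant `M = 4n(n−1)/|K|` for which the bubble is `U = (M / Q²)^((n−2)/4)`. -/
def bubbleScale (n : ℕ) (K : ℝ) : ℝ := 4 * n * ((n : ℝ) - 1) / |K|

theorem bubbleScale_pos (hn : 2 ≤ n) (hK : K ≠ 0) : 0 < bubbleScale n K := by
  have hn' : (2 : ℝ) ≤ n := by exact_mod_cast hn
  exact div_pos (mul_pos (by positivity) (by linarith)) (abs_pos.2 hK)

theorem abs_mul_bubbleScale (n : ℕ) (hK : K ≠ 0) :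
    |K| * bubbleScale n K = 4 * n * ((n : ℝ) - 1) :=
  mul_div_cancel₀ _ (abs_ne_zero.2 hK)

theorem mul_sqrt_bubbleScale (hn : 1 ≤ n) (H K : ℝ) :
    H * √(bubbleScale n K) = 2 * (√(n * ((n : ℝ) - 1)) * H / √|K|) := by
  have hn' : (1 : ℝ) ≤ n := by exact_mod_cast hn
  have hfour : 4 * n * ((n : ℝ) - 1) = 2 ^ 2 * (n * ((n : ℝ) - 1)) := by ring
  rw [bubbleScale, hfour, Real.sqrt_div (mul_nonneg (by norm_num) (mul_nonneg (by positivity)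
    (by linarith))), Real.sqrt_mul (by norm_num), Real.sqrt_sq zero_le_two]
  ring

theorem bubbleU_eq (hn : 1 ≤ n) (K D : ℝ) (x : HalfPt n) :
    bubbleU n K D x
      = bubbleScale n K ^ (((n : ℝ) - 2) / 4) * QD n D x ^ (-(((n : ℝ) - 2) / 2)) := by
  have hn' : (1 : ℝ) ≤ n := by exact_mod_cast hn
  rw [bubbleU, alphaN, bubbleScale, Real.rpow_neg (abs_nonneg K), ← div_eq_mul_inv,
    Real.div_rpow (mul_nonneg (by positivity) (by linarith)) (abs_nonneg K)]

theorem bubbleU_rpow (hn : 3 ≤ n) (hK : K ≠ 0) (hD : 1 < D) (hx : 0 ≤ x.2) (m : ℕ) :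
    bubbleU n K D x ^ (2 * (m : ℝ) / ((n : ℝ) - 2))
      = bubbleScale n K ^ ((m : ℝ) / 2) * (QD n D x ^ m)⁻¹ := by
  have hQ := QD_pos hD hx
  have hM := bubbleScale_pos (n := n) (by omega) hK
  have hn2 : (n : ℝ) - 2 ≠ 0 := sub_ne_zero.2 (by exact_mod_cast (by omega : n ≠ 2))
  have hexpM : ((n : ℝ) - 2) / 4 * (2 * (m : ℝ) / ((n : ℝ) - 2)) = (m : ℝ) / 2 := by
    field_simp
    ring
  have hexpQ : -(((n : ℝ) - 2) / 2) * (2 * (m : ℝ) / ((n : ℝ) - 2)) = -(m : ℝ) := by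
    field_simp
  rw [bubbleU_eq (by omega), Real.mul_rpow (by positivity) (by positivity), ← Real.rpow_mul hM.le,
    ← Real.rpow_mul hQ.le, hexpM, hexpQ, Real.rpow_neg hQ.le, Real.rpow_natCast]

theorem fderiv_bubbleU_apply (hn : 1 ≤ n) (K : ℝ) (hQ : QD n D x ≠ 0) (v : HalfPt n) :
    fderiv ℝ (bubbleU n K D) x v
      = -((n : ℝ) - 2) * bubbleScale n K ^ (((n : ℝ) - 2) / 4) * QD n D x ^ (-((n : ℝ) / 2)) *
        ((∑ i, x.1 i * v.1 i) + (x.2 + D) * v.2) := by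
  have hU : HasFDerivAt (bubbleU n K D) _ x :=
    (((differentiable_QD n D x).hasFDerivAt.rpow_const (p := -(((n : ℝ) - 2) / 2))
      (Or.inl hQ)).const_mul (bubbleScale n K ^ (((n : ℝ) - 2) / 4))).congr_of_eventuallyEq
        (Filter.Eventually.of_forall (bubbleU_eq hn K D))
  have hexp : -(((n : ℝ) - 2) / 2) - 1 = -((n : ℝ) / 2) := by ring
  rw [hU.fderiv, hexp]
  simp only [smul_apply, smul_eq_mul, fderiv_QD_apply]
  ring

theorem gradSq_bubbleU (hn : 1 ≤ n) (hM : 0 ≤ bubbleScale n K) (hQ : 0 < QD n D x) :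
    gradSq n (bubbleU n K D) x
      = ((n : ℝ) - 2) ^ 2 * bubbleScale n K ^ (((n : ℝ) - 2) / 2) *
        ((QD n D x ^ (n - 1))⁻¹ + (QD n D x ^ n)⁻¹) := by
  have hM2 : (bubbleScale n K ^ (((n : ℝ) - 2) / 4)) ^ 2
      = bubbleScale n K ^ (((n : ℝ) - 2) / 2) := by
    rw [← Real.rpow_mul_natCast hM]
    ring_nf
  have hQ2 : (QD n D x ^ (-((n : ℝ) / 2))) ^ 2 = (QD n D x ^ n)⁻¹ := by
    rw [← Real.rpow_mul_natCast hQ.le, ← Real.rpow_natCast, ← Real.rpow_neg hQ.le]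
    push_cast
    ring_nf
  have hstep : (QD n D x ^ (n - 1))⁻¹ = QD n D x * (QD n D x ^ n)⁻¹ := by
    rw [← pow_sub_one_mul (by omega : n ≠ 0)]
    field_simp
  have hsum : (∑ i, x.1 i ^ 2) + (x.2 + D) ^ 2 = QD n D x + 1 := by
    rw [QD, sub_add_cancel]
  simp only [gradSq, fderiv_bubbleU_apply hn K hQ.ne', Pi.single_apply, Pi.zero_apply, mul_ite,
    mul_one, mul_zero, Finset.sum_ite_eq', Finset.mem_univ, if_true,
    Finset.sum_const_zero, add_zero, zero_add, mul_pow, hM2, hQ2, ← Finset.mul_sum]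
  rw [← mul_add, hsum, hstep]
  ring

theorem cN_mul_gradSq_bubbleU_add (hn : 3 ≤ n) (hK : K ≠ 0) (hD : 1 < D) (hx : 0 ≤ x.2) :
    cN n * gradSq n (bubbleU n K D) x +
        |K| * bubbleU n K D x ^ (2 * (n : ℝ) / ((n : ℝ) - 2))
      = 4 * ((n : ℝ) - 1) * bubbleScale n K ^ (((n : ℝ) - 2) / 2) *
        (((n : ℝ) - 2) * (QD n D x ^ (n - 1))⁻¹ + 2 * ((n : ℝ) - 1) * (QD n D x ^ n)⁻¹) := by
  have hM := bubbleScale_pos (n := n) (by omega) hK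
  have hn2 : (n : ℝ) - 2 ≠ 0 := sub_ne_zero.2 (by exact_mod_cast (by omega : n ≠ 2))
  have hMn : bubbleScale n K ^ ((n : ℝ) / 2)
      = bubbleScale n K ^ (((n : ℝ) - 2) / 2) * bubbleScale n K := by
    rw [← Real.rpow_add_one hM.ne']
    ring_nf
  have hcN : cN n * ((n : ℝ) - 2) ^ 2 = 4 * ((n : ℝ) - 1) * ((n : ℝ) - 2) := by
    rw [cN]
    field_simp
  rw [gradSq_bubbleU (by omega) hM.le (QD_pos hD hx), bubbleU_rpow hn hK hD hx, hMn]
  linear_combination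
    bubbleScale n K ^ (((n : ℝ) - 2) / 2) *
      (((QD n D x ^ (n - 1))⁻¹ + (QD n D x ^ n)⁻¹) * hcN +
        (QD n D x ^ n)⁻¹ * abs_mul_bubbleScale n hK)

theorem mul_bubbleU_rpow_boundary (hn : 3 ≤ n) (hK : K ≠ 0) (hD : 1 < D)
    (hHD : H * √(bubbleScale n K) = 2 * D) (y : Fin (n - 1) → ℝ) :
    H * bubbleU n K D (y, 0) ^ (2 * ((n : ℝ) - 1) / ((n : ℝ) - 2))
      = 2 * bubbleScale n K ^ (((n : ℝ) - 2) / 2) * (D * (QD n D (y, 0) ^ (n - 1))⁻¹) := by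
  have hcast : (n : ℝ) - 1 = (n - 1 : ℕ) := by rw [Nat.cast_sub (by omega), Nat.cast_one]
  have hM : bubbleScale n K ^ (((n - 1 : ℕ) : ℝ) / 2)
      = bubbleScale n K ^ (((n : ℝ) - 2) / 2) * √(bubbleScale n K) := by
    rw [Real.sqrt_eq_rpow, ← Real.rpow_add (bubbleScale_pos (by omega) hK), ← hcast]
    ring_nf
  rw [hcast, bubbleU_rpow hn hK hD le_rfl, hM]
  linear_combination
    bubbleScale n K ^ (((n : ℝ) - 2) / 2) * (QD n D (y, 0) ^ (n - 1))⁻¹ * hHD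

theorem integrableOn_bubbleU_rpow (hn : 3 ≤ n) (hK : K ≠ 0) (hD : 1 < D) :
    IntegrableOn (fun x => bubbleU n K D x ^ (2 * (n : ℝ) / ((n : ℝ) - 2)))
      {x : HalfPt n | 0 < x.2} := by
  refine IntegrableOn.congr_fun ?_ (fun x hx => (bubbleU_rpow hn hK hD (le_of_lt hx) n).symm)
    (measurableSet_halfSpace n)
  exact (integrableOn_inv_QD_pow (by omega) hD).const_mul _

theorem integrableOn_gradSq_bubbleU (hn : 3 ≤ n) (hK : K ≠ 0) (hD : 1 < D) :
    IntegrableOn (gradSq n (bubbleU n K D)) {x : HalfPt n | 0 < x.2} := by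
  refine IntegrableOn.congr_fun ?_ (fun x hx => (gradSq_bubbleU (by omega)
    (bubbleScale_pos (by omega) hK).le (QD_pos hD (le_of_lt hx))).symm) (measurableSet_halfSpace n)
  exact ((integrableOn_inv_QD_pow (by omega) hD).add
    (integrableOn_inv_QD_pow (by omega) hD)).const_mul _

theorem integral_bubbleU_nehari (hn : 3 ≤ n) (hK : K ≠ 0) (hD : 1 < D)
    (hHD : H * √(bubbleScale n K) = 2 * D) :
    cN n * (∫ x in {x : HalfPt n | 0 < x.2}, gradSq n (bubbleU n K D) x) +
        |K| * (∫ x in {x : HalfPt n | 0 < x.2},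
          bubbleU n K D x ^ (2 * (n : ℝ) / ((n : ℝ) - 2)))
      = 2 * ((n : ℝ) - 1) * H *
        ∫ y : Fin (n - 1) → ℝ, bubbleU n K D (y, 0) ^ (2 * ((n : ℝ) - 1) / ((n : ℝ) - 2)) := by
  have hbulk := integral_halfSpace_inv_QD_pow (n := n) (m := n - 1) (by omega) (by omega) hD
  rw [Nat.sub_add_cancel (by omega), Nat.cast_sub (by omega), Nat.cast_one] at hbulk
  have hcoef : 2 * ((n : ℝ) - 1) - n = n - 2 := by ring
  rw [hcoef] at hbulk
  have hboundary : H * ∫ y : Fin (n - 1) → ℝ,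
        bubbleU n K D (y, 0) ^ (2 * ((n : ℝ) - 1) / ((n : ℝ) - 2))
      = 2 * bubbleScale n K ^ (((n : ℝ) - 2) / 2) *
        (D * ∫ y : Fin (n - 1) → ℝ, (QD n D (y, 0) ^ (n - 1))⁻¹) := by
    simp only [← integral_const_mul, mul_bubbleU_rpow_boundary hn hK hD hHD]
  rw [← integral_const_mul, ← integral_const_mul,
    ← integral_add ((integrableOn_gradSq_bubbleU hn hK hD).const_mul _)
      ((integrableOn_bubbleU_rpow hn hK hD).const_mul _),
    setIntegral_congr_fun (measurableSet_halfSpace n)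
      fun x hx => cN_mul_gradSq_bubbleU_add hn hK hD (le_of_lt hx),
    integral_const_mul, hbulk]
  linear_combination -(2 * ((n : ℝ) - 1)) * hboundary

end Bubble

theorem bubble_energy_simplification_general
    (n : ℕ) (hn : 3 ≤ n) (K H D : ℝ)
    (hD : D = √((n : ℝ) * ((n : ℝ) - 1)) * H / √|K|) (hD1 : 1 < D) :
    energyE n K H D
      = -(1 / (n : ℝ)) * |K| *
            (∫ x in {x : HalfPt n | 0 < x.2}, bubbleU n K D x ^ (2 * (n : ℝ) / ((n : ℝ) - 2)))
          + H *
            (∫ y : Fin (n - 1) → ℝ,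
              bubbleU n K D (y, 0) ^ (2 * ((n : ℝ) - 1) / ((n : ℝ) - 2))) := by
  have hK : K ≠ 0 := by
    rintro rfl
    norm_num [hD] at hD1
  have hn0 : (n : ℝ) ≠ 0 := by exact_mod_cast (by omega : n ≠ 0)
  have hcoef : ((n : ℝ) - 2) / (2 * n) = 1 / 2 - 1 / n := by field_simp
  have hnehari := integral_bubbleU_nehari hn hK hD1
    ((mul_sqrt_bubbleScale (by omega) H K).trans (by rw [hD]))
  rw [energyE, hcoef]
  linear_combination (1 / 2 : ℝ) * hnehari

theorem bubble_energy_simplification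
    (n : ℕ) (hn : 4 ≤ n) (K H D : ℝ) (hK : K < 0) (hH : 0 < H)
    (hD : D = Real.sqrt ((n : ℝ) * ((n : ℝ) - 1)) * H / Real.sqrt |K|) (hD1 : 1 < D) :
    energyE n K H D
      = -(1 / (n : ℝ)) * |K| *
            (∫ x in {x : HalfPt n | 0 < x.2}, bubbleU n K D x ^ (2 * (n : ℝ) / ((n : ℝ) - 2)))
          + H *
            (∫ y : Fin (n - 1) → ℝ,
              bubbleU n K D (y, 0) ^ (2 * ((n : ℝ) - 1) / ((n : ℝ) - 2))) :=
  bubble_energy_simplification_general n (by omega) K H D hD hD1
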